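/- arXiv:2007.10889 — 3 statements merged into one kernel-verified Lean document; each statement's English description precedes it below -/
import Mathlib

section
/- A subset X of the full blur shift Σ (with the subspace topology inherited from the topology generated by the generalized cylinders) is compact if and only if it is sequentially compact. -/
open Set Filter Topology

namespace BlurPaper

/-- The extended alphabet `Ā = A ⊕ V`, where each blurred set `H ∈ V` is regarded
as a new symbol `H̃`. -/
abbrev Symb (A : Type*) (V : Set (Set A)) := A ⊕ {H : Set A // H ∈ V}

/-- `V` is a family of blurred sets: every member is infinite and two distinct members
have finite intersection. -/
def IsBlurFamily {A : Type*} (V : Set (Set A)) : Prop :=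
  (∀ H ∈ V, H.Infinite) ∧ ∀ G ∈ V, ∀ H ∈ V, G ≠ H → (G ∩ H).Finite

/-- The full blur shift `Σ`: sequences over `Ā` such that a blur symbol is followed
by the same blur symbol. -/
def FullBlur (A : Type*) (V : Set (Set A)) : Set (ℕ → Symb A V) :=
  {x | ∀ (i : ℕ) (H : {H : Set A // H ∈ V}), x i = Sum.inr H → x (i + 1) = Sum.inr H}

/-- Generalized cylinder `Z(α)`. -/
def Z (A : Type*) (V : Set (Set A)) (α : List A) : Set (FullBlur A V) :=
  {x | ∀ i : Fin α.length, x.1 i = Sum.inl (α.get i)}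

/-- Generalized cylinder `Z(α, H, F)`. -/
def ZH (A : Type*) (V : Set (Set A)) (α : List A) (H : {H : Set A // H ∈ V})
    (F : Set A) : Set (FullBlur A V) :=
  {x | (∀ i : Fin α.length, x.1 i = Sum.inl (α.get i)) ∧
    (x.1 α.length = Sum.inr H ∨ ∃ a ∈ H.1 \ F, x.1 α.length = Sum.inl a)}

/-- The collection of all generalized cylinders. -/
def Cylinders (A : Type*) (V : Set (Set A)) : Set (Set (FullBlur A V)) :=
  {U | ∃ α : List A, U = Z A V α} ∪
  {U | ∃ (α : List A) (H : {H : Set A // H ∈ V}) (F : Set A),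
    F ⊆ H.1 ∧ F.Finite ∧ U = ZH A V α H F}

/-- The topology on the full blur shift generated by the generalized cylinders. -/
def tau (A : Type*) (V : Set (Set A)) : TopologicalSpace (FullBlur A V) :=
  TopologicalSpace.generateFrom (Cylinders A V)

/-- The shift map on the full blur shift. -/
def shift (A : Type*) (V : Set (Set A)) : FullBlur A V → FullBlur A V :=
  fun x => ⟨fun i => x.1 (i + 1), fun i H h => x.2 (i + 1) H h⟩

/-- The shift map on `A^ℕ`. -/
def shiftSeq (A : Type*) : (ℕ → A) → ℕ → A := fun x i => x (i + 1)

/-- The prodiscrete topology on `A^ℕ` (product of discrete topologies). -/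
def prodDiscrete (A : Type*) : TopologicalSpace (ℕ → A) :=
  @Pi.topologicalSpace ℕ (fun _ => A) fun _ => ⊥

/-- A (classical) shift space over `A`: closed in the prodiscrete topology and
invariant under the shift map. -/
def IsShiftSpace {A : Type*} (Λ : Set (ℕ → A)) : Prop :=
  @IsClosed _ (prodDiscrete A) Λ ∧ ∀ x ∈ Λ, shiftSeq A x ∈ Λ

/-- `w ∈ B(Y)`: the finite word `w` appears as an initial word of some element of `Y`. -/
def InLang {A : Type*} (Y : Set (ℕ → A)) (w : List A) : Prop :=
  ∃ x ∈ Y, ∀ i : Fin w.length, x i = w.get i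

/-- The follower set `F_Y(w) = {a : w a ∈ B(Y)}`. -/
def Fol {A : Type*} (Y : Set (ℕ → A)) (w : List A) : Set A :=
  {a | InLang Y (w ++ [a])}

/-- The predecessor set `P_Y(a) = {b : b a ∈ B(Y)}`. -/
def Pred {A : Type*} (Y : Set (ℕ → A)) (a : A) : Set A :=
  {b | InLang Y [b, a]}

/-- `B₁(Y)`: the set of letters occurring in sequences of `Y`. -/
def letters {A : Type*} (Y : Set (ℕ → A)) : Set A :=
  {a | ∃ x ∈ Y, ∃ i, x i = a}

/-- The canonical embedding `A^ℕ → Σ`. -/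
def embed (A : Type*) (V : Set (Set A)) : (ℕ → A) → FullBlur A V :=
  fun x => ⟨fun i => Sum.inl (x i), fun _ _ h => absurd h (by simp)⟩

/-- The point `(a₀ … a_{n-1} H̃ H̃ H̃ …)` of the full blur shift. -/
def wordBlur {A : Type*} {V : Set (Set A)} (α : List A) (H : {H : Set A // H ∈ V}) :
    FullBlur A V :=
  ⟨fun i => if h : i < α.length then Sum.inl (α.get ⟨i, h⟩) else Sum.inr H, by
    intro i K hK
    by_cases h : i < α.length
    · simp only [dif_pos h] at hK
      exact absurd hK (by simp)
    · simp only [dif_neg h] at hK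
      simp only [dif_neg (by omega : ¬ i + 1 < α.length)]
      exact hK⟩

/-- The boundary `∂Y`: points `(a₀ … a_{n-1} H̃ H̃ …)` with `a₀ … a_{n-1} ∈ B(Y)` and
`F_Y(a₀ … a_{n-1}) ∩ H` infinite. -/
def boundary (A : Type*) (V : Set (Set A)) (Y : Set (ℕ → A)) : Set (FullBlur A V) :=
  {z | ∃ (α : List A) (H : {H : Set A // H ∈ V}),
    z = wordBlur α H ∧ InLang Y α ∧ (Fol Y α ∩ H.1).Infinite}

/-- The blur shift space `Σ_Y = Y ∪ ∂Y` of `Y` with resolution `V`. -/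
def SigmaOf (A : Type*) (V : Set (Set A)) (Y : Set (ℕ → A)) : Set (FullBlur A V) :=
  embed A V '' Y ∪ boundary A V Y

/-- The subspace topology inherited from the full blur shift. -/
def subTau (A : Type*) (V : Set (Set A)) (X : Set (FullBlur A V)) :
    TopologicalSpace X :=
  TopologicalSpace.induced Subtype.val (tau A V)

/-- `V_Λ`: the blurred sets that appear in `Σ_Λ`, i.e. those meeting `B₁(Λ)` in an
infinite set. -/
def VLam (A : Type*) (V : Set (Set A)) (Λ : Set (ℕ → A)) : Set (Set A) :=
  {H | H ∈ V ∧ (letters Λ ∩ H).Infinite}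


/-- Explicit form of convergence in the blur shift. -/
def Conv {A : Type*} {V : Set (Set A)} {ι : Type*} (f : ι → FullBlur A V) (l : Filter ι)
    (p : FullBlur A V) : Prop :=
  (∀ n a, p.1 n = Sum.inl a → ∀ᶠ k in l, (f k).1 n = Sum.inl a) ∧
  (∀ n H, (∀ m < n, ∃ a, p.1 m = Sum.inl a) → p.1 n = Sum.inr H →
    (∀ᶠ k in l, (f k).1 n = Sum.inr H ∨ ∃ a ∈ H.1, (f k).1 n = Sum.inl a) ∧
    ∀ a, ∀ᶠ k in l, (f k).1 n ≠ Sum.inl a)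

theorem inl_of_le {A : Type*} {V : Set (Set A)} (p : FullBlur A V) {n : ℕ} {a : A}
    (h : p.1 n = Sum.inl a) : ∀ m ≤ n, ∃ b, p.1 m = Sum.inl b := by
  intro m hm
  rcases hb : p.1 m with b | H
  · exact ⟨b, rfl⟩
  · exfalso
    have : ∀ j, p.1 (m + j) = Sum.inr H := by
      intro j
      induction j with
      | zero => exact hb
      | succ j ih => exact p.2 _ _ ih
    have h2 := this (n - m)
    rw [Nat.add_sub_cancel' hm, h] at h2
    cases h2

theorem exists_word {A : Type*} {V : Set (Set A)} (p : FullBlur A V) (n : ℕ)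
    (h : ∀ m < n, ∃ a, p.1 m = Sum.inl a) :
    ∃ α : List A, α.length = n ∧ ∀ i : Fin α.length, p.1 i = Sum.inl (α.get i) := by
  choose a ha using h
  refine ⟨List.ofFn (fun i : Fin n => a i.1 i.2), by simp, ?_⟩
  intro i
  have hi : i.1 < n := by simpa using i.2
  simpa using ha i.1 hi

theorem tendsto_iff_conv {A : Type*} {V : Set (Set A)} {ι : Type*} (f : ι → FullBlur A V)
    (l : Filter ι) (p : FullBlur A V) :
    Tendsto f l (@nhds _ (tau A V) p) ↔ Conv f l p := by
  unfold tau
  rw [TopologicalSpace.tendsto_nhds_generateFrom_iff]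
  constructor
  · intro h
    have hpre : ∀ n a, p.1 n = Sum.inl a → ∀ᶠ k in l, (f k).1 n = Sum.inl a := by
      intro n a ha
      obtain ⟨α, hl, hα⟩ := exists_word p (n + 1)
        (fun m hm => inl_of_le p ha m (Nat.lt_succ_iff.1 hm))
      have := h (Z A V α) (Or.inl ⟨α, rfl⟩) hα
      filter_upwards [this] with k hk
      have hn : n < α.length := by omega
      have h1 := hk ⟨n, hn⟩
      have h2 := hα ⟨n, hn⟩
      simp only at h1 h2
      rw [h1, ← h2, ha]
    refine ⟨hpre, ?_⟩
    intro n H hm hH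
    obtain ⟨α, hl, hα⟩ := exists_word p n hm
    subst hl
    constructor
    · have := h (ZH A V α H ∅) (Or.inr ⟨α, H, ∅, by simp, by simp, rfl⟩) ⟨hα, Or.inl hH⟩
      filter_upwards [this] with k hk
      rcases hk.2 with h1 | ⟨a, ha, h1⟩
      · exact Or.inl h1
      · exact Or.inr ⟨a, ha.1, h1⟩
    · intro a
      have := h (ZH A V α H ({a} ∩ H.1)) (Or.inr ⟨α, H, _, inter_subset_right,
        (finite_singleton a).inter_of_left _, rfl⟩) ⟨hα, Or.inl hH⟩
      filter_upwards [this] with k hk h2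
      rcases hk.2 with h1 | ⟨b, hb, h1⟩
      · rw [h2] at h1; cases h1
      · rw [h2] at h1
        cases h1
        exact hb.2 ⟨rfl, hb.1⟩
  · rintro ⟨h1, h2⟩ s hs hp
    rcases hs with ⟨α, rfl⟩ | ⟨α, H, F, hF, hfin, rfl⟩
    · have : ∀ᶠ k in l, ∀ i : Fin α.length, (f k).1 i = Sum.inl (α.get i) :=
        eventually_all.2 fun i => h1 _ _ (hp i)
      exact this
    · have h3 : ∀ᶠ k in l, ∀ i : Fin α.length, (f k).1 i = Sum.inl (α.get i) :=
        eventually_all.2 fun i => h1 _ _ (hp.1 i)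
      rcases hp.2 with hH | ⟨a, ha, hpa⟩
      · obtain ⟨h4, h5⟩ := h2 α.length H (fun m hm => ⟨_, hp.1 ⟨m, hm⟩⟩) hH
        have h6 : ∀ᶠ k in l, ∀ a ∈ F, (f k).1 α.length ≠ Sum.inl a :=
          (eventually_all_finite hfin).2 fun a _ => h5 a
        filter_upwards [h3, h4, h6] with k k3 k4 k6
        refine ⟨k3, ?_⟩
        rcases k4 with k4 | ⟨a, ha, k4⟩
        · exact Or.inl k4
        · exact Or.inr ⟨a, ⟨ha, fun hh => k6 a hh k4⟩, k4⟩
      · filter_upwards [h3, h1 _ _ hpa] with k k3 k4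
        exact ⟨k3, Or.inr ⟨a, ha, k4⟩⟩

theorem conv_prefix {A : Type*} {V : Set (Set A)} {ι : Type*} {f : ι → FullBlur A V}
    {l : Filter ι} [l.NeBot] {p : FullBlur A V} (h : Conv f l p) (a : ℕ → A) (n : ℕ)
    (ha : ∀ m < n, ∀ᶠ k in l, (f k).1 m = Sum.inl (a m)) :
    ∀ m < n, p.1 m = Sum.inl (a m) := by
  intro m
  induction m using Nat.strong_induction_on with
  | _ m ih =>
    intro hm
    rcases hb : p.1 m with b | H
    · obtain ⟨k, k1, k2⟩ := ((h.1 m b hb).and (ha m hm)).exists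
      rw [← k1, k2]
    · obtain ⟨k, k1, k2⟩ := (((h.2 m H (fun j hj => ⟨_, ih j hj (hj.trans hm)⟩) hb).2 (a m)).and
        (ha m hm)).exists
      exact absurd k2 k1

theorem seq_of_compact {A : Type*} {V : Set (Set A)} (X : Set (FullBlur A V))
    (h : @IsCompact _ (tau A V) X) : @IsSeqCompact _ (tau A V) X := by
  letI := tau A V
  intro x hx
  obtain ⟨p, hpX, hp⟩ := h.ultrafilter_le_nhds ((hyperfilter ℕ).map x)
    (le_principal_iff.2 (by
      show x ⁻¹' X ∈ hyperfilter ℕ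
      exact Filter.Eventually.of_forall hx))
  have hc : Conv x (hyperfilter ℕ : Filter ℕ) p := (tendsto_iff_conv _ _ _).1 hp
  have hfr : ∀ {P : ℕ → Prop}, (∀ᶠ k in (hyperfilter ℕ : Filter ℕ), P k) →
      ∃ᶠ k in atTop, P k := by
    intro P hP
    rw [← Nat.cofinite_eq_atTop]
    exact hP.frequently.filter_mono hyperfilter_le_cofinite
  suffices ∃ φ : ℕ → ℕ, StrictMono φ ∧ Conv (x ∘ φ) atTop p by
    obtain ⟨φ, h1, h2⟩ := this
    exact ⟨p, hpX, φ, h1, (tendsto_iff_conv _ _ _).2 h2⟩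
  by_cases hall : ∀ n, ∃ a, p.1 n = Sum.inl a
  · choose a ha using hall
    obtain ⟨φ, h1, h2⟩ := extraction_forall_of_frequently
      (P := fun N k => ∀ n ∈ Finset.range N, (x k).1 n = Sum.inl (a n)) (fun N => hfr
        ((Finset.eventually_all _).2 fun n _ => hc.1 n _ (ha n)))
    refine ⟨φ, h1, ?_, ?_⟩
    · intro n b hb
      filter_upwards [eventually_gt_atTop n] with k hk
      rw [← hb, ha n]
      exact h2 k n (Finset.mem_range.2 hk)
    · intro n H _ hH
      rw [ha n] at hH; cases hH
  · have hex : ∃ n, ¬ ∃ a, p.1 n = Sum.inl a := not_forall.1 hall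
    classical
    obtain ⟨n, hn, hmin⟩ : ∃ n, (¬ ∃ a, p.1 n = Sum.inl a) ∧ ∀ m < n, ∃ a, p.1 m = Sum.inl a :=
      ⟨Nat.find hex, Nat.find_spec hex, fun m hm => not_not.1 (Nat.find_min hex hm)⟩
    obtain ⟨H, hH⟩ : ∃ H, p.1 n = Sum.inr H := by
      rcases hb : p.1 n with b | H
      · exact absurd ⟨b, hb⟩ hn
      · exact ⟨H, rfl⟩
    have hlt : ∀ m a, p.1 m = Sum.inl a → m < n := by
      intro m a hma
      by_contra hcon
      exact hn (inl_of_le p hma n (not_lt.1 hcon))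
    have huniq : ∀ m K, (∀ j < m, ∃ a, p.1 j = Sum.inl a) → p.1 m = Sum.inr K →
        m = n ∧ K = H := by
      intro m K h1 h2
      have : m = n := by
        rcases lt_trichotomy m n with h3 | h3 | h3
        · obtain ⟨a, ha⟩ := hmin m h3
          rw [ha] at h2; cases h2
        · exact h3
        · exact absurd (h1 n h3) hn
      subst this
      rw [hH] at h2
      exact ⟨rfl, (Sum.inr.inj h2).symm⟩
    have hpre : ∀ᶠ k in (hyperfilter ℕ : Filter ℕ), ∀ m ∈ Finset.range n, (x k).1 m = p.1 m := by
      refine (Finset.eventually_all _).2 fun m hm => ?_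
      obtain ⟨a, ha⟩ := hmin m (Finset.mem_range.1 hm)
      rw [ha]
      exact hc.1 m a ha
    obtain ⟨h4, h5⟩ := hc.2 n H hmin hH
    -- reduce to conditions at `n`
    suffices hs : ∃ φ : ℕ → ℕ, StrictMono φ ∧ (∀ k, ∀ m ∈ Finset.range n, (x (φ k)).1 m = p.1 m) ∧
        (∀ k, (x (φ k)).1 n = Sum.inr H ∨ ∃ a ∈ H.1, (x (φ k)).1 n = Sum.inl a) ∧
        ∀ a, ∀ᶠ k in atTop, (x (φ k)).1 n ≠ Sum.inl a by
      obtain ⟨φ, g1, g2, g3, g4⟩ := hs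
      refine ⟨φ, g1, ?_, ?_⟩
      · intro m a hma
        refine Eventually.of_forall fun k => ?_
        rw [← hma]
        exact g2 k m (Finset.mem_range.2 (hlt m a hma))
      · intro m K k1 k2
        obtain ⟨rfl, rfl⟩ := huniq m K k1 k2
        exact ⟨Eventually.of_forall g3, g4⟩
    by_cases hb : ∀ᶠ k in (hyperfilter ℕ : Filter ℕ), (x k).1 n = Sum.inr H
    · obtain ⟨φ, g1, g2⟩ := extraction_of_frequently_atTop (hfr (hpre.and hb))
      refine ⟨φ, g1, fun k => (g2 k).1, fun k => Or.inl (g2 k).2, fun a =>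
        Eventually.of_forall fun k hk => ?_⟩
      rw [(g2 k).2] at hk; cases hk
    · obtain ⟨φ, g1, g2⟩ := exists_seq_of_forall_finset_exists
        (fun k => (∀ m ∈ Finset.range n, (x k).1 m = p.1 m) ∧
          ∃ a ∈ H.1, (x k).1 n = Sum.inl a)
        (fun i j => i < j ∧ (x i).1 n ≠ (x j).1 n) (by
          intro s hs
          have e1 : ∀ᶠ k in (hyperfilter ℕ : Filter ℕ), ∀ i ∈ s, i < k ∧ (x i).1 n ≠ (x k).1 n := by
            refine (Finset.eventually_all _).2 fun i hi => ?_
            obtain ⟨-, a, -, ha⟩ := hs i hi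
            have e2 : ∀ᶠ k in (hyperfilter ℕ : Filter ℕ), i < k := by
              have := eventually_gt_atTop (α := ℕ) i
              rw [← Nat.cofinite_eq_atTop] at this
              exact this.filter_mono hyperfilter_le_cofinite
            filter_upwards [e2, h5 a] with k k1 k2
            exact ⟨k1, fun hh => k2 (hh ▸ ha)⟩
          have hb' := Ultrafilter.eventually_not.2 hb
          obtain ⟨k, k1, k2, k3, k4⟩ := (e1.and (hpre.and (h4.and hb'))).exists
          exact ⟨k, ⟨k2, k3.resolve_left k4⟩, k1⟩)
      have hmono : StrictMono φ := fun i j hij => (g2 i j hij).1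
      have hinj : Function.Injective (fun k => (x (φ k)).1 n) := by
        intro i j hij
        rcases lt_trichotomy i j with h3 | h3 | h3
        · exact absurd hij (g2 i j h3).2
        · exact h3
        · exact absurd hij.symm (g2 j i h3).2
      refine ⟨φ, hmono, fun k => (g1 k).1, fun k => Or.inr (g1 k).2, fun a => ?_⟩
      have := hinj.tendsto_cofinite.eventually (eventually_cofinite_ne (Sum.inl a))
      rwa [Nat.cofinite_eq_atTop] at this

theorem seq_lemma {A : Type*} {V : Set (Set A)} (X : Set (FullBlur A V))
    (h : @IsSeqCompact _ (tau A V) X) (a : ℕ → A) (n : ℕ) (Y : Set (FullBlur A V))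
    (hYX : Y ⊆ X) (hY : ∀ y ∈ Y, ∀ m < n, y.1 m = Sum.inl (a m))
    (hinf : ((fun y : FullBlur A V => y.1 n) '' Y).Infinite) :
    ∃ p ∈ X, ∃ H, (∀ m < n, p.1 m = Sum.inl (a m)) ∧ p.1 n = Sum.inr H ∧
      ∃ y : ℕ → FullBlur A V, (∀ k, y k ∈ Y) ∧ Function.Injective (fun k => (y k).1 n) ∧
        ∀ᶠ k in atTop, (y k).1 n = Sum.inr H ∨ ∃ b ∈ H.1, (y k).1 n = Sum.inl b := by
  letI := tau A V
  let e := hinf.natEmbedding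
  have he : ∀ k, ∃ y ∈ Y, y.1 n = (e k).1 := fun k => (e k).2
  choose y hyY hye using he
  have hinj : Function.Injective (fun k => (y k).1 n) := by
    intro i j hij
    simp only [hye] at hij
    exact e.injective (Subtype.ext hij)
  obtain ⟨p, hpX, φ, hφ, hlim⟩ := h (fun k => hYX (hyY k))
  have hc : Conv (y ∘ φ) atTop p := (tendsto_iff_conv _ _ _).1 hlim
  have hinj2 : Function.Injective (fun k => ((y ∘ φ) k).1 n) := hinj.comp hφ.injective
  have hp := conv_prefix hc a n
    (fun m hm => Eventually.of_forall fun k => hY _ (hyY _) m hm)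
  rcases hb : p.1 n with b | H
  · exfalso
    obtain ⟨N, hN⟩ := eventually_atTop.1 (hc.1 n b hb)
    have := hinj2 ((hN N le_rfl).trans (hN (N + 1) (by omega)).symm)
    omega
  · exact ⟨p, hpX, H, hp, hb, y ∘ φ, fun k => hyY _, hinj2,
      (hc.2 n H (fun m hm => ⟨_, hp m hm⟩) hb).1⟩

theorem compact_of_seq {A : Type*} {V : Set (Set A)} (X : Set (FullBlur A V))
    (h : @IsSeqCompact _ (tau A V) X) : @IsCompact _ (tau A V) X := by
  letI := tau A V
  rw [isCompact_iff_ultrafilter_le_nhds]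
  intro U hU
  have hUX : ∀ᶠ x in (U : Filter (FullBlur A V)), x ∈ X := le_principal_iff.1 hU
  suffices ∃ p ∈ X, Conv id (U : Filter (FullBlur A V)) p by
    obtain ⟨p, h1, h2⟩ := this
    exact ⟨p, h1, (tendsto_iff_conv id _ _).2 h2⟩
  by_cases hall : ∀ n, ∃ a, ∀ᶠ x in (U : Filter (FullBlur A V)), x.1 n = Sum.inl a
  · choose a ha using hall
    have hy : ∀ N, ∃ y ∈ X, ∀ n ∈ Finset.range N, y.1 n = Sum.inl (a n) := by
      intro N
      obtain ⟨y, h1, h2⟩ := (hUX.and ((Finset.eventually_all (Finset.range N)).2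
        fun n _ => ha n)).exists
      exact ⟨y, h1, h2⟩
    choose y hyX hya using hy
    obtain ⟨p, hpX, φ, hφ, hlim⟩ := h hyX
    have hc : Conv (y ∘ φ) atTop p := (tendsto_iff_conv _ _ _).1 hlim
    have hp : ∀ n, p.1 n = Sum.inl (a n) := by
      intro n
      refine conv_prefix hc a (n + 1) (fun m _ => ?_) n (by omega)
      filter_upwards [eventually_gt_atTop m] with k hk
      exact hya _ m (Finset.mem_range.2 (hk.trans_le (hφ.id_le k)))
    refine ⟨p, hpX, ?_, ?_⟩
    · intro n b hb
      rw [← hb, hp n]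
      exact ha n
    · intro n H _ hH
      rw [hp n] at hH; cases hH
  · have hex : ∃ n, ¬ ∃ a, ∀ᶠ x in (U : Filter (FullBlur A V)), x.1 n = Sum.inl a :=
      not_forall.1 hall
    classical
    obtain ⟨n, hn, hmin⟩ : ∃ n, (¬ ∃ a, ∀ᶠ x in (U : Filter (FullBlur A V)), x.1 n = Sum.inl a) ∧
        ∀ m < n, ∃ a, ∀ᶠ x in (U : Filter (FullBlur A V)), x.1 m = Sum.inl a :=
      ⟨Nat.find hex, Nat.find_spec hex, fun m hm => not_not.1 (Nat.find_min hex hm)⟩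
    have hA : Nonempty A ∨ n = 0 := by
      rcases Nat.eq_zero_or_pos n with h0 | h0
      · exact Or.inr h0
      · exact Or.inl ⟨(hmin 0 h0).choose⟩
    by_cases hne : Nonempty A
    swap
    · -- no letters and no first symbol: every point is a blur point, but blur sets are sets of letters
      have hn0 : n = 0 := hA.resolve_left hne
      subst hn0
      have hE : IsEmpty A := not_nonempty_iff.1 hne
      obtain ⟨p, hp⟩ := hUX.exists
      have key : ∀ x y : FullBlur A V, x = y := by
        intro x y
        apply Subtype.ext
        funext i
        rcases hx : x.1 i with b | H
        · exact (hE.false b).elim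
        · rcases hy : y.1 i with b | K
          · exact (hE.false b).elim
          · congr 1
            apply Subtype.ext
            ext b
            exact (hE.false b).elim
      refine ⟨p, hp, fun _ b => (hE.false b).elim, fun m H _ hH =>
        ⟨Eventually.of_forall fun x => Or.inl ?_, fun b => (hE.false b).elim⟩⟩
      rw [id, key x p, hH]
    choose! a ha using hmin
    have hWU : ∀ᶠ x in (U : Filter (FullBlur A V)), x ∈ X ∧ ∀ m < n, x.1 m = Sum.inl (a m) := by
      have := (Finset.eventually_all (Finset.range n)).2 fun m hm => ha m (Finset.mem_range.1 hm)
      filter_upwards [hUX, this] with x h1 h2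
      exact ⟨h1, fun m hm => h2 m (Finset.mem_range.2 hm)⟩
    have hnot : ∀ b, ∀ᶠ x in (U : Filter (FullBlur A V)), x.1 n ≠ Sum.inl b := fun b =>
      Ultrafilter.eventually_not.2 fun hb => hn ⟨b, hb⟩
    let T : Set {H : Set A // H ∈ V} :=
      {H | ∃ x ∈ X, (∀ m < n, x.1 m = Sum.inl (a m)) ∧ x.1 n = Sum.inr H}
    have hT : T.Finite := by
      by_contra hTinf
      obtain ⟨p, -, H, -, -, y, hyY, hinj, hev⟩ := seq_lemma X h a n
        {x | x ∈ X ∧ (∀ m < n, x.1 m = Sum.inl (a m)) ∧ ∃ H, x.1 n = Sum.inr H}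
        (fun x hx => hx.1) (fun x hx => hx.2.1) (by
          refine Set.Infinite.mono ?_ (Set.Infinite.image Sum.inr_injective.injOn hTinf)
          rintro _ ⟨H, ⟨x, h1, h2, h3⟩, rfl⟩
          exact ⟨x, ⟨h1, h2, H, h3⟩, h3⟩)
      have hev' : ∀ᶠ k in atTop, (y k).1 n = Sum.inr H := by
        filter_upwards [hev] with k hk
        rcases hk with hk | ⟨b, -, hk⟩
        · exact hk
        · obtain ⟨-, -, K, hK⟩ := hyY k
          rw [hk] at hK; cases hK
      obtain ⟨N, hN⟩ := eventually_atTop.1 hev'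
      have := hinj ((hN N le_rfl).trans (hN (N + 1) (by omega)).symm)
      omega
    by_contra hcon
    have hTn : ∀ H ∈ T, ∀ᶠ x in (U : Filter (FullBlur A V)),
        ¬ (x.1 n = Sum.inr H ∨ ∃ b ∈ H.1, x.1 n = Sum.inl b) := by
      rintro H ⟨p, hpX, hpa, hpH⟩
      refine Ultrafilter.eventually_not.2 fun hev => hcon ⟨p, hpX, ?_, ?_⟩
      · intro m b hb
        have hm : m < n := by
          by_contra hge
          obtain ⟨c, hc⟩ := inl_of_le p hb n (not_lt.1 hge)
          rw [hpH] at hc; cases hc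
        rw [← hb, hpa m hm]
        exact ha m hm
      · intro m K h1 h2
        have : m = n := by
          rcases lt_trichotomy m n with h3 | h3 | h3
          · rw [hpa m h3] at h2; cases h2
          · exact h3
          · obtain ⟨c, hc⟩ := h1 n h3
            rw [hpH] at hc; cases hc
        subst this
        rw [hpH] at h2
        cases h2
        exact ⟨hev, hnot⟩
    let Y : Set (FullBlur A V) := {x | (x ∈ X ∧ ∀ m < n, x.1 m = Sum.inl (a m)) ∧
      ∀ H ∈ T, ¬ (x.1 n = Sum.inr H ∨ ∃ b ∈ H.1, x.1 n = Sum.inl b)}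
    have hYU : ∀ᶠ x in (U : Filter (FullBlur A V)), x ∈ Y :=
      hWU.and ((eventually_all_finite hT).2 hTn)
    by_cases hfin : ((fun y : FullBlur A V => y.1 n) '' Y).Finite
    · have : ∀ s ∈ ((fun y : FullBlur A V => y.1 n) '' Y),
          ∀ᶠ x in (U : Filter (FullBlur A V)), x.1 n ≠ s := by
        rintro _ ⟨y, hy, rfl⟩
        rcases hb : y.1 n with b | H
        · simpa [hb] using hnot b
        · exact absurd (Or.inl hb) (hy.2 H ⟨y, hy.1.1, hy.1.2, hb⟩)
      obtain ⟨x, h1, h2⟩ := (hYU.and ((eventually_all_finite hfin).2 this)).exists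
      exact h2 _ ⟨x, h1, rfl⟩ rfl
    · obtain ⟨p, hpX, H, hpa, hpH, y, hyY, -, hev⟩ := seq_lemma X h a n Y
        (fun x hx => hx.1.1) (fun x hx => hx.1.2) hfin
      obtain ⟨k, hk⟩ := hev.exists
      exact (hyY k).2 H ⟨p, hpX, hpa, hpH⟩ hk

/-- A subset of the full blur shift is compact if and only if it
is sequentially compact. -/
theorem isCompact_iff_isSeqCompact {A : Type*} (V : Set (Set A))
    (hV : IsBlurFamily V) (X : Set (FullBlur A V)) :
    @IsCompact _ (tau A V) X ↔ @IsSeqCompact _ (tau A V) X := by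
  exact ⟨seq_of_compact X, compact_of_seq X⟩

end BlurPaper
end

section
/- A blur shift space Σ_Λ (with the subspace topology inherited from the full blur shift Σ) is compact if and only if V_Λ is a finite family of sets and B_1(Λ) ∖ ⋃_{H ∈ V_Λ} H is finite (i.e., the sets of V_Λ cover all but finitely many elements of B_1(Λ)). -/
open Set Filter Topology

namespace BlurPaper

lemma mem_Z {A : Type*} {V : Set (Set A)} {α : List A} {x : FullBlur A V} :
    x ∈ Z A V α ↔ ∀ (i : ℕ) (h : i < α.length), x.1 i = Sum.inl α[i] :=
  ⟨fun h i hi => h ⟨i, hi⟩, fun h i => h i.1 i.2⟩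

lemma mem_Z_append {A : Type*} {V : Set (Set A)} {α : List A} {a : A} {x : FullBlur A V} :
    x ∈ Z A V (α ++ [a]) ↔ x ∈ Z A V α ∧ x.1 α.length = Sum.inl a := by
  simp only [mem_Z]
  constructor
  · intro h
    refine ⟨fun i hi => ?_, ?_⟩
    · have := h i (by simp; omega)
      rwa [List.getElem_append_left hi] at this
    · have := h α.length (by simp)
      simpa using this
  · rintro ⟨h1, h2⟩ i hi
    by_cases h : i < α.length
    · rw [List.getElem_append_left h]; exact h1 i h
    · have : i = α.length := by simp at hi; omega
      subst this
      simpa using h2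

lemma inLang_iff {A : Type*} {Y : Set (ℕ → A)} {w : List A} :
    InLang Y w ↔ ∃ x ∈ Y, ∀ (i : ℕ) (h : i < w.length), x i = w[i] :=
  ⟨fun ⟨x, hx, h⟩ => ⟨x, hx, fun i hi => h ⟨i, hi⟩⟩,
    fun ⟨x, hx, h⟩ => ⟨x, hx, fun i => h i.1 i.2⟩⟩

lemma wordBlur_lt {A : Type*} {V : Set (Set A)} {α : List A} {H : {H : Set A // H ∈ V}}
    {i : ℕ} (h : i < α.length) : (wordBlur α H).1 i = Sum.inl α[i] := by
  simp [wordBlur, h]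

lemma wordBlur_ge {A : Type*} {V : Set (Set A)} {α : List A} {H : {H : Set A // H ∈ V}}
    {i : ℕ} (h : α.length ≤ i) : (wordBlur α H).1 i = Sum.inr H := by
  simp [wordBlur, h]

lemma fol_subset_letters {A : Type*} (Y : Set (ℕ → A)) (w : List A) : Fol Y w ⊆ letters Y := by
  intro a ha
  obtain ⟨x, hx, h⟩ := inLang_iff.1 ha
  refine ⟨x, hx, w.length, ?_⟩
  simpa using h w.length (by simp)

lemma sig_lang {A : Type*} {V : Set (Set A)} {Λ : Set (ℕ → A)} {α : List A}
    {x : FullBlur A V} (hx : x ∈ SigmaOf A V Λ) (hz : x ∈ Z A V α) : InLang Λ α := by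
  rw [mem_Z] at hz
  rw [inLang_iff]
  rcases hx with ⟨y, hy, rfl⟩ | ⟨β, H, rfl, hβ, -⟩
  · exact ⟨y, hy, fun i hi => Sum.inl_injective (hz i hi)⟩
  · obtain ⟨y, hy, h⟩ := inLang_iff.1 hβ
    refine ⟨y, hy, fun i hi => ?_⟩
    have h1 := hz i hi
    by_cases hb : i < β.length
    · rw [wordBlur_lt hb] at h1
      rw [h i hb]; exact Sum.inl_injective h1
    · rw [wordBlur_ge (by omega)] at h1
      simp at h1

lemma sig_blur {A : Type*} {V : Set (Set A)} {Λ : Set (ℕ → A)} {α : List A}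
    {H : {H : Set A // H ∈ V}}
    {x : FullBlur A V} (hx : x ∈ SigmaOf A V Λ) (hz : x ∈ Z A V α)
    (hH : x.1 α.length = Sum.inr H) : x = wordBlur α H ∧ (Fol Λ α ∩ H.1).Infinite := by
  rw [mem_Z] at hz
  rcases hx with ⟨y, hy, rfl⟩ | ⟨β, G, rfl, hβ, hinf⟩
  · simp [embed] at hH
  · have h1 : β.length ≤ α.length := by
      by_contra hc
      rw [wordBlur_lt (by omega)] at hH
      simp at hH
    have h2 : α.length ≤ β.length := by
      by_contra hc
      have := hz β.length (by omega)
      rw [wordBlur_ge le_rfl] at this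
      simp at this
    rw [wordBlur_ge h1] at hH
    obtain rfl : G = H := Sum.inr_injective hH
    obtain rfl : β = α := by
      refine List.ext_getElem (by omega) fun i hi hi' => ?_
      have := hz i hi'
      rw [wordBlur_lt hi] at this
      exact Sum.inl_injective this
    exact ⟨rfl, hinf⟩

lemma conv_of {A : Type*} {V : Set (Set A)} (𝒰 : Ultrafilter (FullBlur A V)) (x : FullBlur A V)
    (h1 : ∀ β, x ∈ Z A V β → Z A V β ∈ 𝒰)
    (h2 : ∀ β H F, x ∈ Z A V β → x.1 β.length = Sum.inr H → F.Finite → ZH A V β H F ∈ 𝒰) :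
    (𝒰 : Filter (FullBlur A V)) ≤ @nhds _ (tau A V) x := by
  rw [tau, TopologicalSpace.nhds_generateFrom]
  refine le_iInf₂ fun s hs => le_principal_iff.2 ?_
  obtain ⟨hxs, ⟨β, rfl⟩ | ⟨β, H, F, -, hF, rfl⟩⟩ := hs
  · exact h1 β hxs
  · obtain ⟨hz, hH | ⟨a, ha, hxa⟩⟩ := hxs
    · exact h2 β H F hz hH hF
    · refine mem_of_superset (h1 (β ++ [a]) (mem_Z_append.2 ⟨hz, hxa⟩)) fun y hy => ?_
      obtain ⟨hy1, hy2⟩ := mem_Z_append.1 hy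
      exact ⟨hy1, Or.inr ⟨a, ha, hy2⟩⟩

lemma mem_of_prefixes {A : Type*} {Λ : Set (ℕ → A)} (hc : @IsClosed _ (prodDiscrete A) Λ)
    (y : ℕ → A) (h : ∀ n, InLang Λ ((List.range n).map y)) : y ∈ Λ := by
  letI : TopologicalSpace A := ⊥
  haveI : DiscreteTopology A := ⟨rfl⟩
  have hc' : IsClosed Λ := hc
  choose z hz hzy using fun n => inLang_iff.1 (h n)
  refine hc'.mem_of_tendsto (f := z) (b := atTop) ?_ (Eventually.of_forall hz)
  rw [tendsto_pi_nhds]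
  intro i
  refine tendsto_const_nhds.congr' ?_
  filter_upwards [eventually_gt_atTop i] with n hn
  have := hzy n i (by simpa using hn)
  simpa using this.symm

lemma compact_of {A : Type*} (V : Set (Set A)) (Λ : Set (ℕ → A)) (hΛ : IsShiftSpace Λ)
    (hfin : (VLam A V Λ).Finite) (hcov : (letters Λ \ ⋃₀ VLam A V Λ).Finite) :
    @IsCompact _ (tau A V) (SigmaOf A V Λ) := by
  letI := tau A V
  rw [isCompact_iff_ultrafilter_le_nhds]
  intro 𝒰 hU
  rw [le_principal_iff] at hU
  have hnil : Z A V [] ∈ 𝒰 := by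
    refine mem_of_superset univ_mem fun x _ => mem_Z.2 fun i hi => ?_
    simp at hi
  by_cases hext : ∀ α, Z A V α ∈ 𝒰 → ∃ a, Z A V (α ++ [a]) ∈ 𝒰
  · haveI : Nonempty A := ⟨(hext [] hnil).choose⟩
    choose! f hf using hext
    let w : ℕ → List A := fun n => Nat.rec [] (fun _ l => l ++ [f l]) n
    have hw : ∀ n, w n = (List.range n).map (fun k => f (w k)) := by
      intro n
      induction n with
      | zero => rfl
      | succ n ih =>
        rw [List.range_succ, List.map_append, ← ih]
        rfl
    have hwU : ∀ n, Z A V (w n) ∈ 𝒰 := by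
      intro n
      induction n with
      | zero => exact hnil
      | succ n ih => exact hf _ ih
    generalize (fun k => f (w k)) = y at hw
    simp only [hw] at hwU
    have hy : y ∈ Λ := by
      refine mem_of_prefixes hΛ.1 y fun n => ?_
      obtain ⟨x, hx1, hx2⟩ := 𝒰.nonempty_of_mem (inter_mem hU (hwU n))
      exact sig_lang hx1 hx2
    refine ⟨embed A V y, Or.inl ⟨y, hy, rfl⟩, conv_of 𝒰 _ ?_ ?_⟩
    · intro β hβ
      rw [mem_Z] at hβ
      have : β = (List.range β.length).map y := by
        refine List.ext_getElem (by simp) fun i hi hi' => ?_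
        have := hβ i hi
        simpa using (Sum.inl_injective this).symm
      rw [this]
      exact hwU _
    · intro β H F _ h
      simp [embed] at h
  · push Not at hext
    obtain ⟨α, hα, hmax⟩ := hext
    have hno : ∀ S : Set A, S.Finite → {x : FullBlur A V | ∃ a ∈ S, x.1 α.length = Sum.inl a} ∉ 𝒰 := by
      intro S hS hmem
      have : (⋃ a ∈ S, {x : FullBlur A V | x.1 α.length = Sum.inl a}) ∈ 𝒰 := by
        refine mem_of_superset hmem fun x hx => ?_
        simpa using hx
      rw [Ultrafilter.finite_biUnion_mem_iff hS] at this
      obtain ⟨a, -, ha⟩ := this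
      exact hmax a (mem_of_superset (inter_mem hα ha) fun x hx => mem_Z_append.2 hx)
    suffices h : ∃ H : {H : Set A // H ∈ V}, (Fol Λ α ∩ H.1).Infinite ∧
        ∀ F : Set A, F.Finite → ZH A V α H F ∈ 𝒰 by
      obtain ⟨H, hinf, hF⟩ := h
      obtain ⟨x, hx1, hx2⟩ := 𝒰.nonempty_of_mem (inter_mem hU hα)
      refine ⟨wordBlur α H, Or.inr ⟨α, H, rfl, sig_lang hx1 hx2, hinf⟩, conv_of 𝒰 _ ?_ ?_⟩
      · intro β hβ
        rw [mem_Z] at hβ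
        refine mem_of_superset hα fun z hz => mem_Z.2 fun i hi => ?_
        have h1 := hβ i hi
        by_cases hia : i < α.length
        · rw [← h1, wordBlur_lt hia]; exact mem_Z.1 hz i hia
        · rw [wordBlur_ge (by omega)] at h1
          simp at h1
      · intro β G F hβ hG hFin
        rw [mem_Z] at hβ
        have h1 : α.length ≤ β.length := by
          by_contra hc
          rw [wordBlur_lt (by omega)] at hG
          simp at hG
        have h2 : β.length ≤ α.length := by
          by_contra hc
          have := hβ α.length (by omega)
          rw [wordBlur_ge le_rfl] at this
          simp at this
        rw [wordBlur_ge h1] at hG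
        obtain rfl : H = G := Sum.inr_injective hG
        obtain rfl : α = β := by
          refine List.ext_getElem (by omega) fun i hi hi' => ?_
          have := hβ i hi'
          rw [wordBlur_lt hi] at this
          exact Sum.inl_injective this
        exact hF F hFin
    have hbig : (⋃ H ∈ VLam A V Λ, {x : FullBlur A V | ∃ a ∈ H, x.1 α.length = Sum.inl a}) ∪
        (⋃ H ∈ VLam A V Λ, {x : FullBlur A V | ∃ h : H ∈ V, x.1 α.length = Sum.inr ⟨H, h⟩}) ∪
        {x : FullBlur A V | ∃ a ∈ letters Λ \ ⋃₀ VLam A V Λ, x.1 α.length = Sum.inl a} ∈ 𝒰 := by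
      refine mem_of_superset (inter_mem hU hα) ?_
      rintro x ⟨hx1, hx2⟩
      rcases hxa : x.1 α.length with a | H
      · have hal : a ∈ letters Λ :=
          fol_subset_letters Λ α (sig_lang hx1 (mem_Z_append.2 ⟨hx2, hxa⟩))
        by_cases hac : a ∈ ⋃₀ VLam A V Λ
        · obtain ⟨H, hH, haH⟩ := hac
          left; left
          simp only [mem_iUnion]
          exact ⟨H, hH, a, haH, hxa⟩
        · right
          exact ⟨a, ⟨hal, hac⟩, hxa⟩
      · left; right
        obtain ⟨-, hinf⟩ := sig_blur hx1 hx2 hxa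
        simp only [mem_iUnion]
        exact ⟨H.1, ⟨H.2, hinf.mono (inter_subset_inter_left _ (fol_subset_letters Λ α))⟩,
          H.2, hxa⟩
    rw [Ultrafilter.union_mem_iff, Ultrafilter.union_mem_iff,
      Ultrafilter.finite_biUnion_mem_iff hfin, Ultrafilter.finite_biUnion_mem_iff hfin] at hbig
    rcases hbig with (⟨H, hH, hmem⟩ | ⟨H, hH, hmem⟩) | hmem
    · refine ⟨⟨H, hH.1⟩, ?_, ?_⟩
      · intro hfi
        refine hno _ hfi (mem_of_superset (inter_mem (inter_mem hU hα) hmem) ?_)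
        rintro x ⟨⟨hx1, hx2⟩, a, ha, hxa⟩
        exact ⟨a, ⟨sig_lang hx1 (mem_Z_append.2 ⟨hx2, hxa⟩), ha⟩, hxa⟩
      · intro F hF
        have hF' := Ultrafilter.compl_mem_iff_notMem.2 (hno F hF)
        refine mem_of_superset (inter_mem (inter_mem hα hmem) hF') ?_
        rintro x ⟨⟨hx, a, ha, hxa⟩, hn⟩
        exact ⟨hx, Or.inr ⟨a, ⟨ha, fun haF => hn ⟨a, haF, hxa⟩⟩, hxa⟩⟩
    · refine ⟨⟨H, hH.1⟩, ?_, ?_⟩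
      · obtain ⟨x, ⟨hx1, hx2⟩, h, hxH⟩ := 𝒰.nonempty_of_mem (inter_mem (inter_mem hU hα) hmem)
        exact (sig_blur hx1 hx2 hxH).2
      · intro F hF
        refine mem_of_superset (inter_mem hα hmem) ?_
        rintro x ⟨hx, h, hxa⟩
        exact ⟨hx, Or.inl hxa⟩
    · exact absurd hmem (hno _ hcov)

lemma letters_first {A : Type*} {Λ : Set (ℕ → A)} (hΛ : IsShiftSpace Λ) {a : A}
    (ha : a ∈ letters Λ) : ∃ x ∈ Λ, x 0 = a := by
  obtain ⟨x, hx, i, hi⟩ := ha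
  induction i generalizing x with
  | zero => exact ⟨x, hx, hi⟩
  | succ n ih => exact ih _ (hΛ.2 x hx) hi

lemma of_compact {A : Type*} (V : Set (Set A)) (Λ : Set (ℕ → A)) (hΛ : IsShiftSpace Λ)
    (hK : @IsCompact _ (tau A V) (SigmaOf A V Λ)) :
    (VLam A V Λ).Finite ∧ (letters Λ \ ⋃₀ VLam A V Λ).Finite := by
  letI := tau A V
  let U : A ⊕ {H : Set A // H ∈ VLam A V Λ} → Set (FullBlur A V) := fun s =>
    match s with
    | Sum.inl a => Z A V [a]
    | Sum.inr H => ZH A V [] ⟨H.1, H.2.1⟩ ∅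
  have hUo : ∀ s, IsOpen (U s) := by
    rintro (a | H)
    · exact TopologicalSpace.isOpen_generateFrom_of_mem (Or.inl ⟨[a], rfl⟩)
    · exact TopologicalSpace.isOpen_generateFrom_of_mem
        (Or.inr ⟨[], ⟨H.1, H.2.1⟩, ∅, empty_subset _, finite_empty, rfl⟩)
  have hnil : ∀ x : FullBlur A V, x ∈ Z A V [] := fun x => mem_Z.2 fun i hi => by simp at hi
  have hcov : SigmaOf A V Λ ⊆ ⋃ s, U s := by
    intro x hx
    rw [mem_iUnion]
    rcases hx0 : x.1 0 with a | H
    · refine ⟨Sum.inl a, ?_⟩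
      exact (mem_Z_append (α := [])).2 ⟨hnil x, hx0⟩
    · obtain ⟨-, hinf⟩ := sig_blur (α := []) hx (hnil x) hx0
      exact ⟨Sum.inr ⟨H.1, H.2, hinf.mono (inter_subset_inter_left _ (fol_subset_letters Λ []))⟩,
        hnil x, Or.inl hx0⟩
  obtain ⟨t, ht⟩ := hK.elim_finite_subcover U hUo hcov
  constructor
  · have hsub : VLam A V Λ ⊆ {H | ∃ h : H ∈ VLam A V Λ, Sum.inr ⟨H, h⟩ ∈ t} := by
      intro H hH
      refine ⟨hH, ?_⟩
      have hx : (wordBlur [] ⟨H, hH.1⟩ : FullBlur A V) ∈ SigmaOf A V Λ := by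
        obtain ⟨a, ⟨y, hy, -⟩, -⟩ := hH.2.nonempty
        refine Or.inr ⟨[], _, rfl, inLang_iff.2 ⟨y, hy, fun i hi => by simp at hi⟩, ?_⟩
        refine hH.2.mono (inter_subset_inter_left _ fun b hb => ?_)
        obtain ⟨z, hz, hzb⟩ := letters_first hΛ hb
        refine inLang_iff.2 ⟨z, hz, fun i hi => ?_⟩
        have : i = 0 := by simpa using hi
        subst this
        simpa using hzb
      have h0 : (wordBlur [] ⟨H, hH.1⟩ : FullBlur A V).1 0 = Sum.inr ⟨H, hH.1⟩ :=
        wordBlur_ge (by simp)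
      have := ht hx
      simp only [mem_iUnion] at this
      obtain ⟨a | G, hs, hxs⟩ := this
      · have := mem_Z.1 hxs 0 (by simp)
        rw [h0] at this
        simp at this
      · obtain ⟨-, h | ⟨b, -, h⟩⟩ := hxs
        · have h' := h0.symm.trans h
          have h'' : H = G.1 := congrArg Subtype.val (Sum.inr_injective h')
          subst h''
          exact hs
        · have h' := h0.symm.trans h
          simp at h'
    refine Finite.subset ?_ hsub
    refine ((t.finite_toSet.preimage Sum.inr_injective.injOn).image Subtype.val).subset ?_
    rintro H ⟨h, hm⟩
    exact ⟨⟨H, h⟩, hm, rfl⟩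
  · refine (t.finite_toSet.preimage Sum.inl_injective.injOn).subset ?_
    rintro a ⟨ha, hac⟩
    obtain ⟨y, hy, hya⟩ := letters_first hΛ ha
    have := ht (Or.inl ⟨y, hy, rfl⟩ : embed A V y ∈ SigmaOf A V Λ)
    simp only [mem_iUnion] at this
    obtain ⟨b | G, hs, hxs⟩ := this
    · have h := mem_Z.1 hxs 0 (by simp)
      have h' : y 0 = b := Sum.inl_injective h
      have : a = b := by rw [← hya, h']
      subst this
      exact hs
    · obtain ⟨-, h | ⟨b, hb, h⟩⟩ := hxs
      · simp [embed] at h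
      · have h' : y 0 = b := Sum.inl_injective h
        have : a = b := by rw [← hya, h']
        subst this
        exact absurd ⟨G.1, G.2, hb.1⟩ hac

/-- A blur shift space `Σ_Λ` is compact if and only if `V_Λ` is a
finite family that covers all but finitely many elements of `B₁(Λ)`. -/
theorem isCompact_sigmaOf_iff {A : Type*} (V : Set (Set A))
    (hV : IsBlurFamily V) (Λ : Set (ℕ → A)) (hΛ : IsShiftSpace Λ) :
    @IsCompact _ (tau A V) (SigmaOf A V Λ) ↔
      (VLam A V Λ).Finite ∧ (letters Λ \ ⋃₀ VLam A V Λ).Finite :=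
  ⟨of_compact V Λ hΛ, fun h => compact_of V Λ hΛ h.1 h.2⟩

end BlurPaper
end

section
/- Let Σ_Λ be a blur shift space (with the subspace topology inherited from the full blur shift Σ) and let L_0(Λ) = {x ∈ Σ_Λ : x_0 is a symbol H̃ with H ∈ V}. Then: (i) the shift map σ : Σ_Λ → Σ_Λ is continuous at every point of Σ_Λ ∖ L_0(Λ); (ii) σ is continuous at a point (H̃ H̃ H̃ …) ∈ L_0(Λ) if and only if there exists a finite set F ⊆ H such that ⋃_{h ∈ H∖F} F_Λ(h) ⊆ H, and for every g ∈ H the set H ∩ P_Λ(g) is finite, where P_Λ(g) = {b ∈ A : bg ∈ B(Λ)} is the predecessor set of g. -/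
open Set Filter Topology

namespace BlurPaper

theorem nhds_blur_aux {A : Type*} (V : Set (Set A)) (H : {H : Set A // H ∈ V})
    (U : Set (FullBlur A V)) (hU : TopologicalSpace.GenerateOpen (Cylinders A V) U) :
    wordBlur ([] : List A) H ∈ U → ∃ F ⊆ H.1, F.Finite ∧ ZH A V [] H F ⊆ U := by
  induction hU with
  | basic s hs =>
    intro hx
    rcases hs with ⟨α, rfl⟩ | ⟨α, G, F, hF, hFf, rfl⟩
    · cases α with
      | nil =>
        refine ⟨∅, empty_subset _, finite_empty, fun y _ i => i.elim0⟩
      | cons a α =>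
        have := hx ⟨0, by simp⟩
        simp [wordBlur] at this
    · cases α with
      | nil =>
        have h2 := hx.2
        simp [wordBlur] at h2
        subst h2
        exact ⟨F, hF, hFf, subset_rfl⟩
      | cons a α =>
        have := hx.1 ⟨0, by simp⟩
        simp [wordBlur] at this
  | univ => intro _; exact ⟨∅, empty_subset _, finite_empty, subset_univ _⟩
  | inter s t _ _ ihs iht =>
    rintro ⟨h1, h2⟩
    obtain ⟨F, hF, hFf, hs⟩ := ihs h1
    obtain ⟨G, hG, hGf, ht⟩ := iht h2
    refine ⟨F ∪ G, union_subset hF hG, hFf.union hGf, fun y hy => ⟨hs ⟨hy.1, ?_⟩, ht ⟨hy.1, ?_⟩⟩⟩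
    · rcases hy.2 with h | ⟨a, ha, h⟩
      · exact Or.inl h
      · exact Or.inr ⟨a, ⟨ha.1, fun h' => ha.2 (Or.inl h')⟩, h⟩
    · rcases hy.2 with h | ⟨a, ha, h⟩
      · exact Or.inl h
      · exact Or.inr ⟨a, ⟨ha.1, fun h' => ha.2 (Or.inr h')⟩, h⟩
  | sUnion S _ ih =>
    rintro ⟨s, hs, hx⟩
    obtain ⟨F, hF, hFf, h⟩ := ih s hs hx
    exact ⟨F, hF, hFf, h.trans (subset_sUnion_of_mem hs)⟩

theorem isOpen_cyl {A : Type*} {V : Set (Set A)} {U : Set (FullBlur A V)}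
    (hU : U ∈ Cylinders A V) : @IsOpen _ (tau A V) U :=
  TopologicalSpace.GenerateOpen.basic U hU

theorem shift_wordBlur_nil {A : Type*} {V : Set (Set A)} (H : {H : Set A // H ∈ V}) :
    shift A V (wordBlur ([] : List A) H) = wordBlur ([] : List A) H := by
  apply Subtype.ext
  funext i
  simp [shift, wordBlur]

theorem wordBlur_nil_mem {A : Type*} {V : Set (Set A)} (H : {H : Set A // H ∈ V}) (F : Set A) :
    wordBlur ([] : List A) H ∈ ZH A V [] H F :=
  ⟨fun i => i.elim0, Or.inl (by simp [wordBlur])⟩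

theorem inLang_pair {A : Type*} {Λ : Set (ℕ → A)} {a b : A} :
    InLang Λ [a, b] ↔ ∃ x ∈ Λ, x 0 = a ∧ x 1 = b := by
  constructor
  · rintro ⟨x, hx, h⟩
    exact ⟨x, hx, h ⟨0, by simp⟩, h ⟨1, by simp⟩⟩
  · rintro ⟨x, hx, h0, h1⟩
    refine ⟨x, hx, fun i => ?_⟩
    rcases i with ⟨_ | _ | i, hi⟩
    · exact h0
    · exact h1
    · simp at hi

/-- Continuity at a blur point in terms of first two coordinates. -/
theorem cont_iff {A : Type*} (V : Set (Set A)) (X : Set (FullBlur A V))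
    (H : {H : Set A // H ∈ V}) :
    @ContinuousWithinAt _ _ (tau A V) (tau A V) (shift A V) X (wordBlur ([] : List A) H) ↔
      ∀ F ⊆ H.1, F.Finite → ∃ F' ⊆ H.1, F'.Finite ∧
        ∀ y ∈ X, y ∈ ZH A V [] H F' → shift A V y ∈ ZH A V [] H F := by
  letI := tau A V
  constructor
  · intro hc F hF hFf
    have hn : ZH A V [] H F ∈ 𝓝 (shift A V (wordBlur ([] : List A) H)) := by
      rw [shift_wordBlur_nil]
      exact (isOpen_cyl (Or.inr ⟨[], H, F, hF, hFf, rfl⟩)).mem_nhds (wordBlur_nil_mem H F)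
    have h := hc hn
    rw [mem_map, mem_nhdsWithin] at h
    obtain ⟨U, hU, hxU, hsub⟩ := h
    obtain ⟨F', hF', hFf', h⟩ := nhds_blur_aux V H U hU hxU
    exact ⟨F', hF', hFf', fun y hy hy' => hsub ⟨h hy', hy⟩⟩
  · intro h
    intro W hW
    rw [shift_wordBlur_nil] at hW
    obtain ⟨U, hUW, hU, hxU⟩ := mem_nhds_iff.1 hW
    obtain ⟨F, hF, hFf, hs⟩ := nhds_blur_aux V H U hU hxU
    obtain ⟨F', hF', hFf', h'⟩ := h F hF hFf
    rw [mem_map, mem_nhdsWithin]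
    exact ⟨ZH A V [] H F', isOpen_cyl (Or.inr ⟨[], H, F', hF', hFf', rfl⟩),
      wordBlur_nil_mem H F', fun y hy => hUW (hs (h' y hy.2 hy.1))⟩

theorem cons_prefix {A : Type*} {V : Set (Set A)} (a : A) (α : List A) (y : FullBlur A V) :
    (∀ i : Fin (a :: α).length, y.1 i = Sum.inl ((a :: α).get i)) ↔
      y.1 0 = Sum.inl a ∧ ∀ i : Fin α.length, (shift A V y).1 i = Sum.inl (α.get i) := by
  constructor
  · intro h
    exact ⟨h ⟨0, by simp⟩, fun i => h i.succ⟩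
  · rintro ⟨h0, h⟩ i
    refine Fin.cases ?_ ?_ i
    · exact h0
    · exact h

/-- (i) The shift map on a blur shift space `Σ_Λ` is continuous at
every point outside `L₀(Λ)`; (ii) it is continuous at a point `(H̃ H̃ H̃ …) ∈ L₀(Λ)`
if and only if there is a finite `F ⊆ H` with `⋃_{h ∈ H∖F} F_Λ(h) ⊆ H`, and
`H ∩ P_Λ(g)` is finite for every `g ∈ H`. -/
theorem continuity_of_shift {A : Type*} (V : Set (Set A))
    (hV : IsBlurFamily V) (Λ : Set (ℕ → A)) (hΛ : IsShiftSpace Λ) :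
    (∀ x ∈ SigmaOf A V Λ, (¬ ∃ H : {H : Set A // H ∈ V}, x.1 0 = Sum.inr H) →
      @ContinuousWithinAt _ _ (tau A V) (tau A V) (shift A V) (SigmaOf A V Λ) x) ∧
    (∀ H : {H : Set A // H ∈ V}, wordBlur ([] : List A) H ∈ SigmaOf A V Λ →
      (@ContinuousWithinAt _ _ (tau A V) (tau A V) (shift A V) (SigmaOf A V Λ)
          (wordBlur ([] : List A) H) ↔
        (∃ F ⊆ H.1, F.Finite ∧ (⋃ h ∈ H.1 \ F, Fol Λ [h]) ⊆ H.1) ∧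
          ∀ g ∈ H.1, (H.1 ∩ Pred Λ g).Finite)) := by
  refine ⟨?_, ?_⟩
  · intro x _ hx0
    letI := tau A V
    obtain ⟨a, ha⟩ : ∃ a, x.1 0 = Sum.inl a := by
      rcases h : x.1 0 with a | K
      · exact ⟨a, rfl⟩
      · exact absurd ⟨K, h⟩ hx0
    apply ContinuousAt.continuousWithinAt
    refine TopologicalSpace.tendsto_nhds_generateFrom_iff.2 ?_
    rintro s (⟨α, rfl⟩ | ⟨α, G, F, hF, hFf, rfl⟩) hs
    · refine mem_of_superset ((isOpen_cyl (Or.inl ⟨a :: α, rfl⟩)).mem_nhds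
        ((cons_prefix a α x).2 ⟨ha, hs⟩)) ?_
      intro y hy
      exact ((cons_prefix a α y).1 hy).2
    · refine mem_of_superset ((isOpen_cyl (Or.inr ⟨a :: α, G, F, hF, hFf, rfl⟩)).mem_nhds
        ⟨(cons_prefix a α x).2 ⟨ha, hs.1⟩, hs.2⟩) ?_
      intro y hy
      exact ⟨((cons_prefix a α y).1 hy.1).2, hy.2⟩
  · intro H _
    rw [cont_iff]
    have key : ∀ F' F : Set A, (∀ y ∈ SigmaOf A V Λ, y ∈ ZH A V [] H F' →
        shift A V y ∈ ZH A V [] H F) → ∀ h ∈ H.1 \ F', ∀ b, InLang Λ [h, b] → b ∈ H.1 \ F := by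
      intro F' F hc h hh b hb
      obtain ⟨x, hx, h0, h1⟩ := inLang_pair.1 hb
      have := (hc (embed A V x) (Or.inl ⟨x, hx, rfl⟩)
        ⟨fun i => i.elim0, Or.inr ⟨h, hh, congrArg Sum.inl h0⟩⟩).2
      rcases this with h' | ⟨c, hc, h'⟩
      · simp [shift, embed] at h'
      · have h2 : x 1 = c := Sum.inl.inj h'
        rw [← h1, h2]
        exact hc
    constructor
    · intro hc
      refine ⟨?_, ?_⟩
      · obtain ⟨F', hF', hFf', h⟩ := hc ∅ (empty_subset _) finite_empty
        refine ⟨F', hF', hFf', ?_⟩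
        intro b hb
        simp only [mem_iUnion] at hb
        obtain ⟨a, ha, hb⟩ := hb
        exact (key F' ∅ h a ha b hb).1
      · intro g hg
        obtain ⟨F', hF', hFf', h⟩ := hc {g} (singleton_subset_iff.2 hg) (finite_singleton g)
        refine hFf'.subset ?_
        rintro b ⟨hbH, hb⟩
        by_contra hbF
        exact (key F' {g} h b ⟨hbH, hbF⟩ g hb).2 rfl
    · rintro ⟨⟨F₀, hF₀, hFf₀, hfol⟩, hpred⟩ F hF hFf
      have hfol' : ∀ h ∈ H.1 \ F₀, Fol Λ [h] ⊆ H.1 := fun h hh b hb =>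
        hfol (by simp only [mem_iUnion]; exact ⟨h, hh, hb⟩)
      refine ⟨F₀ ∪ ⋃ g ∈ F, H.1 ∩ Pred Λ g, ?_, ?_, ?_⟩
      · exact union_subset hF₀ (iUnion₂_subset fun g _ => inter_subset_left)
      · exact hFf₀.union (hFf.biUnion fun g hg => hpred g (hF hg))
      · rintro y hy ⟨_, hy0⟩
        refine ⟨fun i => i.elim0, ?_⟩
        rcases hy0 with hy0 | ⟨h, ⟨hhH, hhF⟩, hy0⟩
        · exact Or.inl (y.2 0 H hy0)
        have hh0 : h ∈ H.1 \ F₀ := ⟨hhH, fun h' => hhF (Or.inl h')⟩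
        have good : ∀ b, InLang Λ [h, b] → b ∈ H.1 \ F := fun b hb =>
          ⟨hfol' h hh0 hb, fun hbF => hhF (Or.inr (mem_iUnion₂.2 ⟨b, hbF, hhH, hb⟩))⟩
        rcases hy with ⟨x, hx, rfl⟩ | ⟨α, G, rfl, hα, hinf⟩
        · exact Or.inr ⟨x 1, good _ (inLang_pair.2 ⟨x, hx, Sum.inl.inj hy0, rfl⟩), rfl⟩
        · match α, hα, hinf, hy0 with
          | [], _, _, hy0 => simp [wordBlur] at hy0
          | [a], _, hinf, hy0 =>
            have hah : a = h := by simpa [wordBlur] using hy0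
            subst hah
            left
            have : G = H := by
              by_contra hne
              refine hinf ((hV.2 G.1 G.2 H.1 H.2 fun h => hne (Subtype.ext h)).subset ?_)
              rintro b ⟨hb, hbG⟩
              exact ⟨hbG, hfol' a hh0 hb⟩
            subst this
            simp [shift, wordBlur]
          | a :: b :: α, hα, _, hy0 =>
            have hah : a = h := by simpa [wordBlur] using hy0
            subst hah
            right
            obtain ⟨x, hx, hp⟩ := hα
            refine ⟨b, good b (inLang_pair.2 ⟨x, hx, hp ⟨0, by simp⟩, hp ⟨1, by simp⟩⟩), ?_⟩
            simp [shift, wordBlur]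


end BlurPaper
end
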